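/- Let R_1, …, R_n, R_{n+1} be independent and identically distributed real-valued random variables on a probability space (Ω, P), let δ ∈ (0,1), and set p := ⌈(n+1)(1−δ)⌉. Define the conformal quantile Q (with values in the extended reals) by Q := the p-th smallest value among R_1, …, R_n if p ≤ n, and Q := +∞ if p = n+1. Then P(R_{n+1} ≤ Q) ≥ 1 − δ. -/

import Mathlib

/-!
For exchangeable scores `X i`, the events "fewer than `p` scores lie strictly below `X i`" all have
the same probability. At every outcome at least `p` of these `n + 1` events occur, so each has
probability at least `p / (n + 1) ≥ 1 - δ`. A score is never strictly below itself, so for the test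
score and `p ≤ n` the event says that it is at most the `p`-th smallest calibration score.
-/

open MeasureTheory ProbabilityTheory

/-- The `k`-th smallest value (k-th order statistic, 1-indexed) of a finite tuple of reals:
the `k`-th entry of the tuple sorted in non-decreasing order. -/
noncomputable def kthSmallest {m : ℕ} (r : Fin m → ℝ) (k : ℕ) : ℝ :=
  ((List.ofFn r).mergeSort (· ≤ ·)).getD (k - 1) 0

open scoped Finset

section OrderStatistics

lemma kthSmallest_add_one {m : ℕ} (r : Fin m → ℝ) (j : Fin m) :
    kthSmallest r (j + 1) = (r ∘ Tuple.sort r) j := by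
  have hperm : ((List.ofFn r).mergeSort (· ≤ ·)).Perm (List.ofFn (r ∘ Tuple.sort r)) :=
    (List.mergeSort_perm _ _).trans ((Tuple.sort r).ofFn_comp_perm r).symm
  have hsort : (List.ofFn r).mergeSort (· ≤ ·) = List.ofFn (r ∘ Tuple.sort r) :=
    hperm.eq_of_sortedLE List.sortedLE_mergeSort (Tuple.monotone_sort r).sortedLE_ofFn
  simp [kthSmallest, hsort]

lemma le_kthSmallest_iff_card_lt {m : ℕ} (r : Fin m → ℝ) {k : ℕ} (hk : 1 ≤ k) (hkm : k ≤ m)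
    (a : ℝ) : a ≤ kthSmallest r k ↔ #{i | r i < a} < k := by
  obtain ⟨j, rfl⟩ : ∃ j : Fin m, k = j + 1 := ⟨⟨k - 1, by omega⟩, (Nat.sub_add_cancel hk).symm⟩
  have hcard : #{i | (r ∘ Tuple.sort r) i < a} = #{i | r i < a} :=
    Finset.card_equiv (Tuple.sort r) (by simp)
  rw [kthSmallest_add_one, ← not_lt, Nat.lt_succ_iff, ← hcard, ← not_lt,
    Tuple.lt_card_lt_iff_apply_lt_of_monotone (Tuple.monotone_sort r)]

end OrderStatistics

section StrictRank

variable {ι κ α : Type*} [Fintype ι] [Fintype κ] [LinearOrder α]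

/-- The strict rank of the entry `x i` of a finite family: the number of entries strictly below it.
It is 0-indexed, and tied entries share the smallest of their ranks. -/
def strictRank (x : ι → α) (i : ι) : ℕ := #{j | x j < x i}

lemma strictRank_comp_equiv (e : κ ≃ ι) (x : ι → α) (i : κ) :
    strictRank (x ∘ e) i = strictRank x (e i) :=
  Finset.card_equiv e (by simp)

lemma strictRank_last {n : ℕ} (x : Fin (n + 1) → α) :
    strictRank x (Fin.last n) = #{i : Fin n | x i.castSucc < x (Fin.last n)} := by
  simp only [strictRank, Finset.card_filter, Fin.sum_univ_castSucc, lt_irrefl, if_false, add_zero]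

lemma le_card_strictRank_lt (x : ι → α) {k : ℕ} (hk : k ≤ Fintype.card ι) :
    k ≤ #{i | strictRank x i < k} := by
  by_cases hall : ∀ i, strictRank x i < k
  · simpa [hall] using hk
  · -- The entries below a smallest entry of rank at least `k` have rank below `k`.
    push Not at hall
    obtain ⟨i, hi, hmin⟩ := Set.exists_min_image {i | k ≤ strictRank x i} x (Set.toFinite _) hall
    exact hi.trans <| Finset.card_le_card <| Finset.monotone_filter_right _ fun j _ hj ↦
      not_le.mp fun hjk ↦ (hmin j hjk).not_gt hj

lemma last_le_kthSmallest_iff_strictRank_lt {n : ℕ} (x : Fin (n + 1) → ℝ) {k : ℕ}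
    (hk : 1 ≤ k) (hkn : k ≤ n) :
    x (Fin.last n) ≤ kthSmallest (fun i : Fin n ↦ x i.castSucc) k ↔
      strictRank x (Fin.last n) < k := by
  rw [le_kthSmallest_iff_card_lt _ hk hkn, strictRank_last]

lemma measurable_strictRank [TopologicalSpace α] [OrderClosedTopology α]
    [SecondCountableTopology α] [MeasurableSpace α] [OpensMeasurableSpace α] (i : ι) :
    Measurable fun x : ι → α ↦ strictRank x i := by
  simp only [strictRank, Finset.card_filter]
  exact Finset.measurable_sum _ fun j _ ↦ Measurable.ite
    (measurableSet_lt (measurable_pi_apply j) (measurable_pi_apply i))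
    measurable_const measurable_const

end StrictRank

section Exchangeable

variable {Ω ι α : Type*} [MeasurableSpace Ω] {P : Measure Ω}

lemma natCast_mul_measure_univ_le_sum_measure [Fintype ι] {A : ι → Set Ω}
    [∀ ω, DecidablePred (ω ∈ A ·)] (hA : ∀ i, NullMeasurableSet (A i) P) {k : ℕ}
    (hk : ∀ᵐ ω ∂P, k ≤ #{i | ω ∈ A i}) :
    k * P Set.univ ≤ ∑ i, P (A i) :=
  calc k * P Set.univ = ∫⁻ _, k ∂P := (lintegral_const _).symm
    _ ≤ ∫⁻ ω, ∑ i, (A i).indicator 1 ω ∂P := by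
      refine lintegral_mono_ae (hk.mono fun ω hω ↦ ?_)
      simpa [Set.indicator_apply] using (Nat.cast_le (α := ENNReal)).mpr hω
    _ = ∑ i, ∫⁻ ω, (A i).indicator 1 ω ∂P :=
      lintegral_finsetSum' _ fun i _ ↦ aemeasurable_one.indicator₀ (hA i)
    _ = ∑ i, P (A i) := Finset.sum_congr rfl fun i _ ↦ lintegral_indicator_one₀ (hA i)

variable [MeasurableSpace α]

/-- Exchangeability of a family of random variables: its joint law is invariant under permutations
of the index type. Stating this with `IdentDistrib` makes a.e.-measurability part of the notion. -/
def Exchangeable (X : ι → Ω → α) (P : Measure Ω) : Prop :=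
  ∀ σ : Equiv.Perm ι, IdentDistrib (fun ω i ↦ X (σ i) ω) (fun ω i ↦ X i ω) P P

lemma exchangeable_of_iIndepFun_of_identDistrib [Countable ι] {X : ι → Ω → α}
    (hindep : iIndepFun X P) (hident : ∀ i j, IdentDistrib (X i) (X j) P P) : Exchangeable X P :=
  fun σ ↦ IdentDistrib.pi (fun i ↦ hident (σ i) i) (hindep.precomp σ.injective) hindep

namespace Exchangeable

variable [Fintype ι] [LinearOrder α] [TopologicalSpace α] [OrderClosedTopology α]
  [SecondCountableTopology α] [OpensMeasurableSpace α] {X : ι → Ω → α}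

lemma identDistrib_strictRank (hX : Exchangeable X P) (i j : ι) :
    IdentDistrib (fun ω ↦ strictRank (X · ω) i) (fun ω ↦ strictRank (X · ω) j) P P := by
  classical
  have hswap (ω : Ω) : strictRank (fun l ↦ X (Equiv.swap i j l) ω) j = strictRank (X · ω) i :=
    (strictRank_comp_equiv (Equiv.swap i j) (X · ω) j).trans (by rw [Equiv.swap_apply_right])
  simpa only [Function.comp_def, hswap] using
    (hX (Equiv.swap i j)).comp (measurable_strictRank j)

lemma div_card_le_measure_strictRank_lt [IsProbabilityMeasure P] (hX : Exchangeable X P) (i : ι)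
    {k : ℕ} (hk : k ≤ Fintype.card ι) :
    (k : ENNReal) / Fintype.card ι ≤ P {ω | strictRank (X · ω) i < k} := by
  have hmeas (j : ι) : NullMeasurableSet {ω | strictRank (X · ω) j < k} P :=
    (hX.identDistrib_strictRank j j).aemeasurable_fst.nullMeasurable measurableSet_Iio
  have hsame (j : ι) : P {ω | strictRank (X · ω) j < k} = P {ω | strictRank (X · ω) i < k} :=
    (hX.identDistrib_strictRank j i).measure_mem_eq measurableSet_Iio
  refine ENNReal.div_le_of_le_mul' ?_
  calc (k : ENNReal) = k * P Set.univ := by simp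
    _ ≤ ∑ j, P {ω | strictRank (X · ω) j < k} :=
      natCast_mul_measure_univ_le_sum_measure hmeas
        (.of_forall fun ω ↦ le_card_strictRank_lt (X · ω) hk)
    _ = Fintype.card ι * P {ω | strictRank (X · ω) i < k} := by simp [hsame]

end Exchangeable

end Exchangeable

lemma ofReal_le_natCeil_mul_div {m : ℕ} (hm : 0 < m) (q : ℝ) :
    ENNReal.ofReal q ≤ (⌈m * q⌉₊ : ENNReal) / m := by
  have hm' : (0 : ℝ) < m := Nat.cast_pos.mpr hm
  calc ENNReal.ofReal q ≤ ENNReal.ofReal (⌈m * q⌉₊ / m) :=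
      ENNReal.ofReal_le_ofReal ((le_div_iff₀' hm').mpr (Nat.le_ceil _))
    _ = (⌈m * q⌉₊ : ENNReal) / m := by
      rw [ENNReal.ofReal_div_of_pos hm', ENNReal.ofReal_natCast, ENNReal.ofReal_natCast]

theorem split_conformal_general {Ω : Type*} [MeasurableSpace Ω]
    (P : Measure Ω) [IsProbabilityMeasure P] (n : ℕ) (R : Fin (n + 1) → Ω → ℝ)
    (hR : Exchangeable R P)
    (δ : ℝ) (hδ : δ ∈ Set.Ioo (0 : ℝ) 1)
    (p : ℕ) (hp : p = ⌈((n : ℝ) + 1) * (1 - δ)⌉₊)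
    (Q : Ω → EReal)
    (hQ : ∀ ω, Q ω = if p ≤ n
      then ((kthSmallest (fun i : Fin n => R i.castSucc ω) p : ℝ) : EReal)
      else (⊤ : EReal)) :
    P {ω | ((R (Fin.last n) ω : ℝ) : EReal) ≤ Q ω} ≥ ENNReal.ofReal (1 - δ) := by
  have hn : (0 : ℝ) < n + 1 := by positivity
  have hp_pos : 1 ≤ p := by
    rw [hp, Nat.one_le_ceil_iff]
    exact mul_pos hn (sub_pos.mpr hδ.2)
  have hp_le : p ≤ n + 1 := by
    rw [hp, Nat.ceil_le, Nat.cast_add_one]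
    exact mul_le_of_le_one_right hn.le (sub_le_self 1 hδ.1.le)
  have hcover (ω : Ω) (hω : strictRank (R · ω) (Fin.last n) < p) :
      (R (Fin.last n) ω : EReal) ≤ Q ω := by
    rw [hQ]
    split_ifs with hpn
    · exact EReal.coe_le_coe ((last_le_kthSmallest_iff_strictRank_lt (R · ω) hp_pos hpn).mpr hω)
    · exact le_top
  calc ENNReal.ofReal (1 - δ)
    _ ≤ (p : ENNReal) / Fintype.card (Fin (n + 1)) := by
      rw [hp, Fintype.card_fin, ← Nat.cast_add_one]
      exact ofReal_le_natCeil_mul_div n.succ_pos (1 - δ)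
    _ ≤ P {ω | strictRank (R · ω) (Fin.last n) < p} :=
      hR.div_card_le_measure_strictRank_lt (Fin.last n) (by simpa using hp_le)
    _ ≤ P {ω | (R (Fin.last n) ω : EReal) ≤ Q ω} := measure_mono hcover

/-- Split conformal prediction guarantee: for i.i.d. real random variables
`R 0, …, R (n-1), R n` (calibration scores `R i.castSucc` for `i : Fin n` and a test score
`R (Fin.last n)`), `δ ∈ (0,1)` and `p := ⌈(n+1)(1-δ)⌉`, the conformal quantile `Q` (valued
in the extended reals) defined as the `p`-th smallest calibration score if `p ≤ n` and `+∞`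
if `p = n+1` satisfies `P(R_{n+1} ≤ Q) ≥ 1 - δ`. -/
theorem split_conformal {Ω : Type*} [MeasurableSpace Ω] (P : Measure Ω) [IsProbabilityMeasure P]
    (n : ℕ) (R : Fin (n + 1) → Ω → ℝ)
    (hmeas : ∀ i, Measurable (R i))
    (hindep : iIndepFun R P)
    (hident : ∀ i j, IdentDistrib (R i) (R j) P P)
    (δ : ℝ) (hδ : δ ∈ Set.Ioo (0 : ℝ) 1)
    (p : ℕ) (hp : p = ⌈((n : ℝ) + 1) * (1 - δ)⌉₊)
    (Q : Ω → EReal)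
    (hQ : ∀ ω, Q ω = if p ≤ n
      then ((kthSmallest (fun i : Fin n => R i.castSucc ω) p : ℝ) : EReal)
      else (⊤ : EReal)) :
    P {ω | ((R (Fin.last n) ω : ℝ) : EReal) ≤ Q ω} ≥ ENNReal.ofReal (1 - δ) := by
  exact split_conformal_general P n R (exchangeable_of_iIndepFun_of_identDistrib hindep hident)
    δ hδ p hp Q hQ
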